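/- arXiv:2105.10677 — 2 statements merged into one kernel-verified Lean document; each statement's English description precedes it below -/
import Mathlib

section
/- Let 1 ≤ p < q ≤ m with q − p > 1 and let D be a regular domain that is a (p, q)-hybrid* domain. Let φ : D^n → Δ(A) be a unanimous and strategy-proof RSCF. Then for every voter i ∈ N, every P_{-i} ∈ D^{n−1}, and all P_i, P_i′ ∈ D whose tops a_s = r_1(P_i) and a_t = r_1(P_i′) are distinct alternatives in M: φ_{a_k}(P_i, P_{-i}) = φ_{a_k}(P_i′, P_{-i}) for every alternative a_k ∉ {a_s, a_t}. -/
open Finset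

noncomputable section

/-- A preference is a linear order over the `m` alternatives, represented as a bijection
from rank positions (0-based: position `0` is the top) to alternatives. -/
abbrev Pref (m : ℕ) := Fin m ≃ Fin m

namespace PFBRPaper

variable {m n : ℕ}

/-- `a` is strictly preferred to `b` under `P`. -/
def Prefers (P : Pref m) (a b : Fin m) : Prop := P.symm a < P.symm b

/-- The last alternative `a_m` (0-based index `m-1`). -/
def lastAlt (m : ℕ) [NeZero m] : Fin m :=
  ⟨m - 1, Nat.sub_lt (Nat.pos_of_ne_zero (NeZero.ne m)) Nat.one_pos⟩

/-- Every alternative is top-ranked by some preference in the domain. -/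
def MinimallyRich [NeZero m] (D : Set (Pref m)) : Prop :=
  ∀ a : Fin m, ∃ P ∈ D, P 0 = a

/-- The preference ranking `a_m` first, ..., `a_1` last. -/
def revPref (m : ℕ) : Pref m :=
  ⟨Fin.rev, Fin.rev, fun i => Fin.rev_rev i, fun i => Fin.rev_rev i⟩

/-- Diversity, with the labeling convention: the domain contains the preference ranking
`a_1` first, `a_2` second, ..., `a_m` last (the identity), together with its
complete reversal. -/
def Diversity (D : Set (Pref m)) : Prop :=
  Equiv.refl (Fin m) ∈ D ∧ revPref m ∈ D

/-- Two preferences are adjacent: the alternatives at two contiguous rank positions are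
swapped and everything else is unchanged. -/
def Adjacent (P P' : Pref m) : Prop :=
  P ≠ P' ∧ ∃ k : ℕ, ∃ hk : k + 1 < m,
    P ⟨k, Nat.lt_of_succ_lt hk⟩ = P' ⟨k + 1, hk⟩ ∧
    P ⟨k + 1, hk⟩ = P' ⟨k, Nat.lt_of_succ_lt hk⟩ ∧
    ∀ l : Fin m, (l : ℕ) ≠ k → (l : ℕ) ≠ k + 1 → P l = P' l

/-- `π 0, …, π (v-1)` is a path in `D` connecting `P` and `P'`. -/
def IsPath (D : Set (Pref m)) (P P' : Pref m) (π : ℕ → Pref m) (v : ℕ) : Prop :=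
  1 ≤ v ∧ (∀ i < v, π i ∈ D) ∧
  (∀ i < v, ∀ j < v, π i = π j → i = j) ∧
  π 0 = P ∧ π (v - 1) = P' ∧
  ∀ i, i + 1 < v → Adjacent (π i) (π (i + 1))

/-- The path `π 0, …, π (v-1)` has no `{a,b}`-restoration: the relative ranking of
`a` and `b` switches at most once along the path. -/
def NoRestoration (π : ℕ → Pref m) (v : ℕ) (a b : Fin m) : Prop :=
  ∀ i j k : ℕ, i < j → j < k → k < v →
    ¬(Prefers (π i) a b ∧ Prefers (π j) b a ∧ Prefers (π k) a b) ∧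
    ¬(Prefers (π i) b a ∧ Prefers (π j) a b ∧ Prefers (π k) b a)

def NoRestorationDomain (D : Set (Pref m)) : Prop :=
  ∀ P ∈ D, ∀ P' ∈ D, P ≠ P' → ∀ a b : Fin m,
    ∃ π v, IsPath D P P' π v ∧ NoRestoration π v a b

def RegularDomain [NeZero m] (D : Set (Pref m)) : Prop :=
  MinimallyRich D ∧ Diversity D ∧ NoRestorationDomain D

/-- `a ≈ b`: the two alternatives are strongly connected in the domain `D`. -/
def StronglyConnected [NeZero m] (D : Set (Pref m)) (a b : Fin m) : Prop :=
  a ≠ b ∧ ∃ P ∈ D, ∃ P' ∈ D,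
    P 0 = a ∧ P 1 = b ∧ P' 0 = b ∧ P' 1 = a ∧
    ∀ k : Fin m, 2 ≤ (k : ℕ) → P k = P' k

/-- `l` is a vertex-path of the graph `G_≈^B(D)`. -/
def IsVertexPathOn [NeZero m] (D : Set (Pref m)) (B : Set (Fin m)) (l : List (Fin m)) : Prop :=
  l ≠ [] ∧ l.Nodup ∧ (∀ x ∈ l, x ∈ B) ∧ l.Chain' (StronglyConnected D)

/-- `l` is a vertex-path of `G_≈^B(D)` connecting `a` and `b`. -/
def VertexPathBetween [NeZero m] (D : Set (Pref m)) (B : Set (Fin m)) (a b : Fin m)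
    (l : List (Fin m)) : Prop :=
  IsVertexPathOn D B l ∧ l.head? = some a ∧ l.getLast? = some b

/-- `a` is a leaf of the subgraph `G_≈^B(D)`. -/
def IsLeaf [NeZero m] (D : Set (Pref m)) (B : Set (Fin m)) (a : Fin m) : Prop :=
  a ∈ B ∧ ∃! b : Fin m, b ∈ B ∧ StronglyConnected D a b

/-- Single-peakedness w.r.t. the natural order. -/
def SinglePeaked [NeZero m] (P : Pref m) : Prop :=
  ∀ a b : Fin m, ((a < b ∧ b < P 0) ∨ (P 0 < b ∧ b < a)) → Prefers P b a

/-- A `(p,q)`-hybrid preference (thresholds `p < q`, 0-based). -/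
def IsHybridPref [NeZero m] (p q : Fin m) (P : Pref m) : Prop :=
  (∀ r s : Fin m, ((r ≤ p ∧ s ≤ p) ∨ (q ≤ r ∧ q ≤ s)) →
      ((r < s ∧ s < P 0) ∨ (P 0 < s ∧ s < r)) → Prefers P s r) ∧
  (P 0 ≤ p → ∀ l : Fin m, p ≤ l → l ≤ q → l ≠ p → Prefers P p l) ∧
  (q ≤ P 0 → ∀ l : Fin m, p ≤ l → l ≤ q → l ≠ q → Prefers P q l)

/-- The `(p,q)`-hybrid domain of all `(p,q)`-hybrid preferences. -/
def hybridDomain [NeZero m] (p q : Fin m) : Set (Pref m) := {P | IsHybridPref p q P}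

/-- `D` is a `(p,q)`-hybrid* domain. -/
def IsHybridStar [NeZero m] (D : Set (Pref m)) (p q : Fin m) : Prop :=
  D ⊆ hybridDomain p q ∧
  (∀ k : Fin m, k ≠ 0 → k ≠ lastAlt m →
      ∃ l, VertexPathBetween D Set.univ 0 (lastAlt m) l ∧ k ∈ l) ∧
  ((p : ℕ) + 1 < (q : ℕ) → ∀ a : Fin m, ¬ IsLeaf D (Set.Icc p q) a)

/-- A lottery over the alternatives. -/
def Lottery (m : ℕ) : Type :=
  {f : Fin m → ℝ // (∀ a, 0 ≤ f a) ∧ ∑ a, f a = 1}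

/-- The probability that a lottery assigns to a set of alternatives. -/
def Lottery.prob (lam : Lottery m) (B : Finset (Fin m)) : ℝ := ∑ a ∈ B, lam.1 a

/-- The support of a lottery. -/
def Lottery.supp (lam : Lottery m) : Finset (Fin m) :=
  Finset.univ.filter (fun a => 0 < lam.1 a)

/-- The degenerate lottery on `a`. -/
def degLottery (a : Fin m) : Lottery m :=
  ⟨fun b => if b = a then 1 else 0,
   fun b => by by_cases h : b = a <;> simp [h],
   by simp⟩

/-- A profile of preferences drawn from the domain `D`. -/
abbrev Profile (D : Set (Pref m)) (n : ℕ) := Fin n → D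

/-- The top-ranked alternative of a preference in the domain. -/
def topOf [NeZero m] {D : Set (Pref m)} (P : D) : Fin m := P.1 0

def Unanimous [NeZero m] {D : Set (Pref m)} (φ : Profile D n → Lottery m) : Prop :=
  ∀ (P : Profile D n) (a : Fin m), (∀ i, topOf (P i) = a) → φ P = degLottery a

/-- The total probability of the `k` top-ranked alternatives of `P` under `lam`. -/
def topSum (lam : Lottery m) (P : Pref m) (k : ℕ) : ℝ :=
  ∑ t ∈ Finset.univ.filter (fun t : Fin m => (t : ℕ) < k), lam.1 (P t)

/-- Strategy-proofness: truth-telling first-order stochastically dominates any unilateral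
misrepresentation. -/
def StrategyProof {D : Set (Pref m)} (φ : Profile D n → Lottery m) : Prop :=
  ∀ (i : Fin n) (P : Profile D n) (Pi' : D) (k : ℕ), k ≤ m →
    topSum (φ (Function.update P i Pi')) (P i).1 k ≤ topSum (φ P) (P i).1 k

def TopsOnly [NeZero m] {D : Set (Pref m)} (φ : Profile D n → Lottery m) : Prop :=
  ∀ P P' : Profile D n, (∀ i, topOf (P i) = topOf (P' i)) → φ P = φ P'

def Anonymous {D : Set (Pref m)} (φ : Profile D n → Lottery m) : Prop :=
  ∀ (P : Profile D n) (σ : Equiv.Perm (Fin n)), φ (P ∘ σ) = φ P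

/-- The interval `[a_k, a_m]`. -/
def upSet (k : Fin m) : Finset (Fin m) := Finset.univ.filter (fun a => k ≤ a)

/-- The interval `[a_1, a_k]`. -/
def downSet (k : Fin m) : Finset (Fin m) := Finset.univ.filter (fun a => a ≤ k)

/-- The interval `[a_p, a_q]`. -/
def midSet (p q : Fin m) : Finset (Fin m) := Finset.univ.filter (fun a => p ≤ a ∧ a ≤ q)

/-- `S(k,P)`: the voters whose preference top is not to the left of `a_k`. -/
def voterSet [NeZero m] {D : Set (Pref m)} (P : Profile D n) (k : Fin m) : Finset (Fin n) :=
  Finset.univ.filter (fun i => k ≤ topOf (P i))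

/-- `β_{S(k,P)}([a_k, a_m])`, with the convention that it is `0` for `k = m`. -/
def tailProb [NeZero m] {D : Set (Pref m)} (β : Finset (Fin n) → Lottery m)
    (P : Profile D n) (k : ℕ) : ℝ :=
  if h : k < m then (β (voterSet P ⟨k, h⟩)).prob (upSet ⟨k, h⟩) else 0

def BallotUnanimity [NeZero m] (β : Finset (Fin n) → Lottery m) : Prop :=
  β Finset.univ = degLottery (lastAlt m) ∧ β ∅ = degLottery 0

def BallotMonotone (β : Finset (Fin n) → Lottery m) : Prop :=
  ∀ S T : Finset (Fin n), S ⊂ T →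
    ∀ k : Fin m, (β S).prob (upSet k) ≤ (β T).prob (upSet k)

/-- `φ` is a probabilistic fixed ballot rule with probabilistic ballots `β`. -/
def IsPFBRWith [NeZero m] {D : Set (Pref m)} (φ : Profile D n → Lottery m)
    (β : Finset (Fin n) → Lottery m) : Prop :=
  BallotUnanimity β ∧ BallotMonotone β ∧
  ∀ (P : Profile D n) (k : Fin m),
    (φ P).1 k = tailProb β P (k : ℕ) - tailProb β P ((k : ℕ) + 1)

def IsPFBR [NeZero m] {D : Set (Pref m)} (φ : Profile D n → Lottery m) : Prop :=
  ∃ β, IsPFBRWith φ β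

/-- The constrained random-dictatorship condition w.r.t. `a_p` and `a_q`. -/
def ConstrainedRD (p q : Fin m) (β : Finset (Fin n) → Lottery m) : Prop :=
  ∃ ε : Fin n → ℝ, (∀ i, 0 ≤ ε i) ∧ ∑ i, ε i = 1 ∧
    ∀ S : Finset (Fin n),
      (β S).prob (upSet q) = ∑ i ∈ S, ε i ∧
      (β S).prob (downSet p) = ∑ i ∈ Sᶜ, ε i

/-- The constrained random-dictatorship condition w.r.t. `a_p` and `a_q` with every
conditional dictatorial coefficient equal to `1/n`. -/
def ConstrainedRDUniform (p q : Fin m) (β : Finset (Fin n) → Lottery m) : Prop :=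
  ∀ S : Finset (Fin n),
    (β S).prob (upSet q) = (S.card : ℝ) / (n : ℝ) ∧
    (β S).prob (downSet p) = ((Sᶜ : Finset (Fin n)).card : ℝ) / (n : ℝ)

/-- Anonymity at the level of probabilistic ballots. -/
def BallotAnonymous (β : Finset (Fin n) → Lottery m) : Prop :=
  ∀ S S' : Finset (Fin n), S.Nonempty → S'.Nonempty → S.card = S'.card → β S = β S'

/-- Per-capita monotonicity w.r.t. `a_p` and `a_q`. -/
def PerCapitaMonotone (p q : Fin m) (β : Finset (Fin n) → Lottery m) : Prop :=
  ∀ S S' : Finset (Fin n), S.Nonempty → S ⊂ S' → S' ⊂ Finset.univ →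
    (∀ t : Fin m, q ≤ t →
      (β S).prob (upSet t) / (S.card : ℝ) ≤ (β S').prob (upSet t) / (S'.card : ℝ)) ∧
    (∀ s : Fin m, s ≤ p →
      (β Sᶜ).prob (downSet s) / (S.card : ℝ) ≤ (β S'ᶜ).prob (downSet s) / (S'.card : ℝ))

/-- Decomposability: `φ` is a mixture of finitely many unanimous and strategy-proof
deterministic social choice functions. -/
def Decomposable [NeZero m] {D : Set (Pref m)} (φ : Profile D n → Lottery m) : Prop :=
  ∃ (r : ℕ) (f : Fin r → (Profile D n → Fin m)) (α : Fin r → ℝ),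
    (∀ k, 0 < α k) ∧ ∑ k, α k = 1 ∧
    (∀ k, Unanimous (fun P => degLottery (f k P)) ∧
          StrategyProof (fun P => degLottery (f k P))) ∧
    ∀ (P : Profile D n) (a : Fin m),
      (φ P).1 a = ∑ k, α k * (if f k P = a then 1 else 0)

/-- `b̂_S^R`: the `≺`-minimum of `supp(β_S) ∩ R` (with the convention `b̂_N^R = a_m`). -/
def bR [NeZero m] (β : Finset (Fin n) → Lottery m) (q : Fin m) (S : Finset (Fin n)) : Fin m :=
  if h : ((β S).supp ∩ upSet q).Nonempty then ((β S).supp ∩ upSet q).min' h else lastAlt m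

/-- `b̂_S^L`: the `≺`-maximum of `supp(β_S) ∩ L` (with the convention `b̂_∅^L = a_1`). -/
def bL [NeZero m] (β : Finset (Fin n) → Lottery m) (p : Fin m) (S : Finset (Fin n)) : Fin m :=
  if h : ((β S).supp ∩ downSet p).Nonempty then ((β S).supp ∩ downSet p).max' h else 0

/-- `α = min over nonempty S ⊂ N of min(β_S(b̂_S^R)/|S|, β_S(b̂_S^L)/(n-|S|))`. -/
def alphaVal [NeZero m] (β : Finset (Fin n) → Lottery m) (p q : Fin m) : ℝ :=
  sInf {x : ℝ | ∃ S : Finset (Fin n), S.Nonempty ∧ S ≠ Finset.univ ∧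
    x = min ((β S).1 (bR β q S) / (S.card : ℝ))
            ((β S).1 (bL β p S) / ((n : ℝ) - (S.card : ℝ)))}

/-- `γ_S = (|S|/n) e_{b̂_S^R} + ((n-|S|)/n) e_{b̂_S^L}`, pointwise. -/
def gammaFun [NeZero m] (β : Finset (Fin n) → Lottery m) (p q : Fin m)
    (S : Finset (Fin n)) (a : Fin m) : ℝ :=
  ((S.card : ℝ) / (n : ℝ)) * (if a = bR β q S then 1 else 0)
  + (((n : ℝ) - (S.card : ℝ)) / (n : ℝ)) * (if a = bL β p S then 1 else 0)

/-- The max-min formula `f(P) = max_{S ⊆ N} min({r_1(P_j) : j ∈ S} ∪ {b_S})`. -/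
def fbrOutcome [NeZero m] {D : Set (Pref m)} (b : Finset (Fin n) → Fin m)
    (P : Profile D n) : Fin m :=
  Finset.univ.sup' Finset.univ_nonempty
    (fun S : Finset (Fin n) =>
      (insert (b S) (S.image (fun j => topOf (P j)))).inf' (Finset.insert_nonempty _ _) id)

/-- `f` is a `(p,q)`-fixed ballot rule with deterministic ballots `b` and constrained
dictator `i`. -/
def IsFBRWith [NeZero m] {D : Set (Pref m)} (p q : Fin m) (f : Profile D n → Fin m)
    (b : Finset (Fin n) → Fin m) (i : Fin n) : Prop :=
  b Finset.univ = lastAlt m ∧ b ∅ = 0 ∧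
  (∀ S T : Finset (Fin n), S ⊂ T → b S ≤ b T) ∧
  (∀ S : Finset (Fin n), (i ∈ S → q ≤ b S) ∧ (i ∉ S → b S ≤ p)) ∧
  ∀ P : Profile D n, f P = fbrOutcome b P

end PFBRPaper

open PFBRPaper

/-
Under strategy-proofness a swap of two adjacently ranked alternatives moves probability between
these two only, and by no-restoration the amount moved depends only on how the other voters rank
the pair; unanimity makes it zero when the top is not involved. Hence two reports that have some
alternative preferred to `x` in common give `x` the same probability, and so do two reports whose
tops are joined by a vertex-path avoiding `x`.

Both thresholds are cuts of the graph of strong connections, which settles all `x` outside the open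
interval `(p, q)`. Neither threshold is a leaf in `M`, so each has two neighbours there: letting
disjoint groups of voters move from the threshold to the two neighbours shows that the probability
it loses is an additive set function. Two additive functions, one at each threshold, leave
nothing for a third alternative when all voters report a threshold, and an interior `x` then gets
exactly the weight of the voters who top-rank it, which no voter outside that group affects.
-/

namespace PFBRPaper

section Interchangeable

variable {ι β γ : Type*} [DecidableEq ι] {f : (ι → β) → γ} {b c d : β}

/-- The ballots `b` and `c` are interchangeable under `f` when a voter who moves from one to the
other never affects the value of `f`. With `f` the probability of one fixed alternative, this is
the form in which all invariance properties below are stated. -/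
def Interchangeable (f : (ι → β) → γ) (b c : β) : Prop :=
  ∀ (P : ι → β) (i : ι), f (Function.update P i b) = f (Function.update P i c)

namespace Interchangeable

theorem refl (f : (ι → β) → γ) (b : β) : Interchangeable f b b := fun _ _ => rfl

theorem symm (h : Interchangeable f b c) : Interchangeable f c b := fun P i => (h P i).symm

theorem trans (hbc : Interchangeable f b c) (hcd : Interchangeable f c d) :
    Interchangeable f b d :=
  fun P i => (hbc P i).trans (hcd P i)

theorem apply_congr [Finite ι] {P P' : ι → β} (h : ∀ i, Interchangeable f (P i) (P' i)) :
    f P = f P' := by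
  cases nonempty_fintype ι
  suffices ∀ J : Finset ι, f P = f (J.piecewise P' P) by
    simpa only [Finset.piecewise_univ] using this Finset.univ
  intro J
  induction J using Finset.induction_on with
  | empty => rw [Finset.piecewise_empty]
  | insert j J hj ih =>
    have hPj : (J.piecewise P' P) j = P j := Finset.piecewise_eq_of_notMem _ _ _ hj
    rw [ih, Finset.piecewise_insert, ← h j, ← hPj, Function.update_eq_self]

end Interchangeable

end Interchangeable

section UnanimousRule

variable {ι β α : Type*} {top : β → α} {f : (ι → β) → α → ℝ} {a x : α} {b c u v : β}

/-- `f` is a random choice rule on profiles of ballots which, when all voters cast the same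
ballot `b`, selects the alternative `top b` with certainty. -/
structure UnanimousRule [Fintype α] (top : β → α) (f : (ι → β) → α → ℝ) : Prop where
  mem_stdSimplex : ∀ P, f P ∈ stdSimplex ℝ α
  apply_const : ∀ b x, x ≠ top b → f (fun _ => b) x = 0

namespace UnanimousRule

variable [Fintype α]

theorem sum_eq_one_of_support_subset (hf : UnanimousRule top f) {P : ι → β} {A : Finset α}
    (hA : ∀ x ∉ A, f P x = 0) : ∑ x ∈ A, f P x = 1 :=
  (Finset.sum_subset A.subset_univ fun x _ hx => hA x hx).trans (hf.mem_stdSimplex P).2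

theorem sum_le_one (hf : UnanimousRule top f) (P : ι → β) (A : Finset α) :
    ∑ x ∈ A, f P x ≤ 1 :=
  (hf.mem_stdSimplex P).2 ▸ Finset.sum_le_sum_of_subset_of_nonneg A.subset_univ
    fun x _ _ => (hf.mem_stdSimplex P).1 x

end UnanimousRule

variable [DecidableEq ι]

/-- The profile in which the voters in `S` cast the ballot `c` and all others cast `b`. -/
def splitProfile (S : Finset ι) (c b : β) : ι → β := fun i => if i ∈ S then c else b

/-- Two ballots are linked when they are interchangeable for every alternative other than their
own tops; strongly connected alternatives give rise to linked ballots. -/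
def Linked (top : β → α) (f : (ι → β) → α → ℝ) (b c : β) : Prop :=
  ∀ x, x ≠ top b → x ≠ top c → Interchangeable (f · x) b c

/-- The probability that `a` loses when the voters in `S` switch from `b` to `c` in the profile
where everybody casts `b`; meant for `a = top b`. -/
def switchMass (f : (ι → β) → α → ℝ) (a : α) (b c : β) (S : Finset ι) : ℝ :=
  1 - f (splitProfile S c b) a

/-- Additivity of `switchMass` as a set function. -/
def SwitchAdditive (f : (ι → β) → α → ℝ) (a : α) (b c : β) : Prop :=
  ∀ ⦃S S' : Finset ι⦄, Disjoint S S' →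
    switchMass f a b c (S ∪ S') = switchMass f a b c S + switchMass f a b c S'

variable [Finite ι]

theorem switchMass_congr (h : Interchangeable (f · a) c u) (S : Finset ι) :
    switchMass f a b c S = switchMass f a b u S := by
  refine congrArg (1 - ·) (Interchangeable.apply_congr (f := (f · a)) fun i => ?_)
  by_cases hi : i ∈ S <;> simp only [splitProfile, hi, if_true, if_false]
  exacts [h, .refl _ _]

theorem SwitchAdditive.congr (hadd : SwitchAdditive f a b c) (h : Interchangeable (f · a) c u) :
    SwitchAdditive f a b u := fun S S' hd => by
  simpa only [switchMass_congr h] using hadd hd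

theorem exists_apply_eq_apply_splitProfile {P : ι → β}
    (h : ∀ i, Interchangeable (f · x) (P i) b ∨ Interchangeable (f · x) (P i) c) :
    ∃ S : Finset ι, f P x = f (splitProfile S c b) x := by
  classical
  cases nonempty_fintype ι
  refine ⟨Finset.univ.filter fun i => ¬ Interchangeable (f · x) (P i) b,
    Interchangeable.apply_congr (f := (f · x)) fun i => ?_⟩
  by_cases hi : Interchangeable (f · x) (P i) b
  · simp [splitProfile, hi]
  · simpa [splitProfile, hi] using (h i).resolve_left hi

namespace UnanimousRule

variable [Fintype α]

theorem apply_eq_zero (hf : UnanimousRule top f) {P : ι → β}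
    (h : ∀ i, Interchangeable (f · x) (P i) b) (hx : x ≠ top b) : f P x = 0 :=
  (Interchangeable.apply_congr (f := (f · x)) h).trans (hf.apply_const b x hx)

theorem switchMass_eq_apply_of_linked (hf : UnanimousRule top f) (hbu : top b ≠ top u)
    (h : Linked top f b u) (S : Finset ι) :
    switchMass f (top b) b u S = f (splitProfile S u b) (top u) := by
  classical
  have hsum : ∑ x ∈ {top b, top u}, f (splitProfile S u b) x = 1 := by
    refine hf.sum_eq_one_of_support_subset fun x hx => ?_
    obtain ⟨hxb, hxu⟩ : x ≠ top b ∧ x ≠ top u := by simpa using hx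
    refine hf.apply_eq_zero (b := b) (fun i => ?_) hxb
    by_cases hi : i ∈ S <;> simp only [splitProfile, hi, if_true, if_false]
    exacts [(h x hxb hxu).symm, .refl _ _]
  rw [Finset.sum_pair hbu] at hsum
  rw [switchMass]
  linarith

/-- In the profile where `S` casts `u`, `S'` casts `v` and the others cast `b`, the three tops
receive the masses of `S`, of `S'`, and whatever `S ∪ S'` leaves over. -/
theorem switchAdditive_of_linked (hf : UnanimousRule top f) (hbu : top b ≠ top u)
    (hbv : top b ≠ top v) (huv : top u ≠ top v) (hlu : Linked top f b u) (hlv : Linked top f b v)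
    (h : Interchangeable (f · (top b)) u v) : SwitchAdditive f (top b) b u := by
  classical
  intro S S' hd
  set P : ι → β := fun i => if i ∈ S then u else if i ∈ S' then v else b with hP
  have htop_b : f P (top b) = f (splitProfile (S ∪ S') u b) (top b) := by
    refine Interchangeable.apply_congr (f := (f · (top b))) fun i => ?_
    by_cases hi : i ∈ S <;> by_cases hi' : i ∈ S' <;>
      simp [hP, splitProfile, hi, hi', h.symm, Interchangeable.refl]
  have htop_u : f P (top u) = f (splitProfile S u b) (top u) := by
    refine Interchangeable.apply_congr (f := (f · (top u))) fun i => ?_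
    by_cases hi : i ∈ S <;> by_cases hi' : i ∈ S' <;>
      simp [hP, splitProfile, hi, hi', (hlv _ hbu.symm huv).symm, Interchangeable.refl]
  have htop_v : f P (top v) = f (splitProfile S' v b) (top v) := by
    refine Interchangeable.apply_congr (f := (f · (top v))) fun i => ?_
    by_cases hi : i ∈ S
    · simpa [hP, splitProfile, hi, Finset.disjoint_left.1 hd hi] using
        (hlu _ hbv.symm huv.symm).symm
    · simpa [hP, splitProfile, hi] using .refl _ _
  have hsum : ∑ x ∈ {top b, top u, top v}, f P x = 1 := by
    refine hf.sum_eq_one_of_support_subset fun x hx => ?_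
    obtain ⟨hxb, hxu, hxv⟩ : x ≠ top b ∧ x ≠ top u ∧ x ≠ top v := by simpa using hx
    refine hf.apply_eq_zero (b := b) (fun i => ?_) hxb
    by_cases hi : i ∈ S <;> by_cases hi' : i ∈ S' <;>
      simp [hP, hi, hi', (hlu x hxb hxu).symm, (hlv x hxb hxv).symm, Interchangeable.refl]
  rw [Finset.sum_insert (by simp [hbu, hbv]), Finset.sum_pair huv, htop_b, htop_u, htop_v,
    ← hf.switchMass_eq_apply_of_linked hbu hlu, ← hf.switchMass_eq_apply_of_linked hbv hlv,
    ← switchMass_congr h] at hsum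
  rw [switchMass]
  linarith

/-- By additivity the two tops share a total mass of `2` in the profiles of `S` and of its
complement, hence at least, and so exactly, `1` in each. -/
theorem apply_splitProfile_add_eq_one (hf : UnanimousRule top f) (hbc : top b ≠ top c)
    (hb : SwitchAdditive f (top b) b c) (hc : SwitchAdditive f (top c) c b) (S : Finset ι) :
    f (splitProfile S c b) (top b) + f (splitProfile S c b) (top c) = 1 := by
  classical
  cases nonempty_fintype ι
  have hcompl : ∀ (T : Finset ι) {d e : β}, top d ≠ top e → SwitchAdditive f (top d) d e →
      f (splitProfile T e d) (top d) + f (splitProfile Tᶜ e d) (top d) = 1 := by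
    intro T d e hde hadd
    have huniv : splitProfile (T ∪ Tᶜ) e d = fun _ => e := by funext i; simp [splitProfile]
    have h := hadd (disjoint_compl_right (a := T))
    simp only [switchMass, huniv, hf.apply_const e _ hde] at h
    linarith
  have hswap : ∀ T : Finset ι, splitProfile Tᶜ b c = splitProfile T c b := by
    intro T; funext i; simp [splitProfile, ite_not]
  have hle := hf.sum_le_one (splitProfile S c b) {top b, top c}
  have hle' := hf.sum_le_one (splitProfile Sᶜ c b) {top b, top c}
  rw [Finset.sum_pair hbc] at hle hle'
  have hb_sum := hcompl S hbc hb
  have hc_sum := hcompl Sᶜ hbc.symm hc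
  rw [hswap, hswap] at hc_sum
  linarith

theorem apply_splitProfile_eq_zero (hf : UnanimousRule top f) (hbc : top b ≠ top c)
    (hb : SwitchAdditive f (top b) b c) (hc : SwitchAdditive f (top c) c b)
    (hxb : x ≠ top b) (hxc : x ≠ top c) (S : Finset ι) : f (splitProfile S c b) x = 0 := by
  classical
  have hle := hf.sum_le_one (splitProfile S c b) {x, top b, top c}
  rw [Finset.sum_insert (by simp [hxb, hxc]), Finset.sum_pair hbc,
    hf.apply_splitProfile_add_eq_one hbc hb hc] at hle
  linarith [(hf.mem_stdSimplex (splitProfile S c b)).1 x]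

/-- `top b` loses the mass of `S ∪ K` while `top c` wins that of `S` only, so additivity leaves
the mass of `K` to `x`. -/
theorem apply_piecewise_eq_switchMass (hf : UnanimousRule top f) (hbc : top b ≠ top c)
    (hb : SwitchAdditive f (top b) b c) (hc : SwitchAdditive f (top c) c b)
    (hxb : x ≠ top b) (hxc : x ≠ top c) {K : Finset ι} (hKS : Disjoint S K) {R : ι → β}
    (hRb : ∀ i ∈ K, Interchangeable (f · (top b)) (R i) c)
    (hRc : ∀ i ∈ K, Interchangeable (f · (top c)) (R i) b)
    (hR : ∀ i ∈ K, ∀ y, y ≠ x → y ≠ top b → y ≠ top c →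
      Interchangeable (f · y) (R i) b ∨ Interchangeable (f · y) (R i) c) :
    f (K.piecewise R (splitProfile S c b)) x = switchMass f (top b) b c K := by
  classical
  set P := K.piecewise R (splitProfile S c b) with hP
  have htop_b : f P (top b) = f (splitProfile (S ∪ K) c b) (top b) := by
    refine Interchangeable.apply_congr (f := (f · (top b))) fun i => ?_
    by_cases hi : i ∈ K
    · simpa [hP, splitProfile, hi] using hRb i hi
    · simpa [hP, splitProfile, hi] using .refl _ _
  have htop_c : f P (top c) = f (splitProfile S c b) (top c) := by
    refine Interchangeable.apply_congr (f := (f · (top c))) fun i => ?_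
    by_cases hi : i ∈ K
    · simpa [hP, splitProfile, hi, Finset.disjoint_right.1 hKS hi] using hRc i hi
    · simpa [hP, splitProfile, hi] using .refl _ _
  have hsum : ∑ y ∈ {x, top b, top c}, f P y = 1 := by
    refine hf.sum_eq_one_of_support_subset fun y hy => ?_
    obtain ⟨hyx, hyb, hyc⟩ : y ≠ x ∧ y ≠ top b ∧ y ≠ top c := by simpa using hy
    obtain ⟨T, hT⟩ : ∃ T : Finset ι, f P y = f (splitProfile T c b) y := by
      refine exists_apply_eq_apply_splitProfile fun i => ?_
      by_cases hi : i ∈ K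
      · simpa [hP, hi] using hR i hi y hyx hyb hyc
      · by_cases hiS : i ∈ S <;> simp [hP, splitProfile, hi, hiS, Interchangeable.refl]
    rw [hT, hf.apply_splitProfile_eq_zero hbc hb hc hyb hyc]
  rw [Finset.sum_insert (by simp [hxb, hxc]), Finset.sum_pair hbc, htop_b, htop_c] at hsum
  have hunion := hb hKS
  have hpair := hf.apply_splitProfile_add_eq_one hbc hb hc S
  simp only [switchMass] at hunion ⊢
  linarith

/-- The probability of `x` is an additive weight of the set of voters who top-rank `x`: among
the alternatives involved, the rule is a random dictatorship. -/
theorem apply_eq_switchMass (hf : UnanimousRule top f) (hbc : top b ≠ top c)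
    (hb : SwitchAdditive f (top b) b c) (hc : SwitchAdditive f (top c) c b)
    (hxb : x ≠ top b) (hxc : x ≠ top c)
    (hdb : ∀ d, top d = x → Interchangeable (f · (top b)) d c)
    (hdc : ∀ d, top d = x → Interchangeable (f · (top c)) d b)
    (hdy : ∀ d, top d = x → ∀ y, y ≠ x → y ≠ top b → y ≠ top c →
      Interchangeable (f · y) d b ∨ Interchangeable (f · y) d c)
    (hdx : ∀ d, top d ≠ x → Interchangeable (f · x) d b ∨ Interchangeable (f · x) d c)
    {P : ι → β} {K : Finset ι} (hK : ∀ i, i ∈ K ↔ top (P i) = x) :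
    f P x = switchMass f (top b) b c K := by
  classical
  cases nonempty_fintype ι
  set S : Finset ι := {i | top (P i) ≠ x ∧ ¬ Interchangeable (f · x) (P i) b} with hS
  have hKS : Disjoint S K := by
    simp only [Finset.disjoint_left, hK, hS, Finset.mem_filter_univ]
    exact fun i hi => hi.1
  rw [← hf.apply_piecewise_eq_switchMass hbc hb hc hxb hxc hKS
    (fun i hi => hdb _ ((hK i).1 hi)) (fun i hi => hdc _ ((hK i).1 hi))
    (fun i hi => hdy _ ((hK i).1 hi))]
  refine Interchangeable.apply_congr (f := (f · x)) fun i => ?_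
  by_cases hi : i ∈ K
  · simp [hi, Interchangeable.refl]
  have htop : top (P i) ≠ x := (hK i).not.1 hi
  by_cases hib : Interchangeable (f · x) (P i) b
  · simp [splitProfile, hi, hS, hib]
  · simpa [splitProfile, hi, hS, hib, htop] using (hdx _ htop).resolve_left hib

end UnanimousRule

end UnanimousRule

variable {m n : ℕ}

section Prefers

variable {P : Pref m} {a b c : Fin m}

theorem Prefers.ne (h : Prefers P a b) : a ≠ b := fun hab => lt_irrefl _ (hab ▸ h)

theorem prefers_of_not_prefers (hab : a ≠ b) (h : ¬ Prefers P a b) : Prefers P b a :=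
  lt_of_le_of_ne (not_lt.1 h) fun e => hab (P.symm.injective e).symm

variable [NeZero m]

theorem prefers_top (h : b ≠ P 0) : Prefers P (P 0) b := by
  rw [Prefers, P.symm_apply_apply, Fin.pos_iff_ne_zero]
  exact fun hb => h (P.symm_apply_eq.1 hb)

theorem not_prefers_top : ¬ Prefers P a (P 0) := by
  simp [Prefers]

theorem eq_top_of_prefers_apply_one (h : Prefers P c (P 1)) : c = P 0 := by
  rw [Prefers, P.symm_apply_apply, Fin.lt_def] at h
  have hone : ((1 : Fin m) : ℕ) ≤ 1 := by rw [Fin.val_one']; exact Nat.mod_le 1 m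
  have hc : P.symm c = 0 := Fin.ext (by rw [Fin.val_zero]; omega)
  rw [← hc, P.apply_symm_apply]

end Prefers

section TopSum

theorem topSum_eq_sum_filter (lam : Lottery m) (P : Pref m) (k : ℕ) :
    topSum lam P k = ∑ a with (P.symm a : ℕ) < k, lam.1 a := by
  rw [topSum, Finset.sum_filter, Finset.sum_filter,
    ← P.sum_comp fun a => if (P.symm a : ℕ) < k then lam.1 a else 0]
  simp only [P.symm_apply_apply]

theorem topSum_succ (lam : Lottery m) (P : Pref m) (a : Fin m) :
    topSum lam P (P.symm a + 1) = topSum lam P (P.symm a) + lam.1 a := by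
  have hinsert : (Finset.univ.filter fun t : Fin m => (t : ℕ) < P.symm a + 1) =
      insert (P.symm a) (Finset.univ.filter fun t : Fin m => (t : ℕ) < P.symm a) := by
    ext t
    simp only [Finset.mem_filter_univ, Finset.mem_insert, Fin.ext_iff]
    omega
  rw [topSum, hinsert, Finset.sum_insert (by simp), P.apply_symm_apply, add_comm, topSum]

end TopSum

section Swaps

variable {P P' : Pref m} {z w x y : Fin m}

/-- `P'` arises from `P` by exchanging `z` with the alternative `w` ranked immediately below it:
an oriented form of `Adjacent` which names the two alternatives. -/
def Swaps (P P' : Pref m) (z w : Fin m) : Prop :=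
  (P.symm z : ℕ) + 1 = P.symm w ∧ P' = P.trans (Equiv.swap z w)

theorem Adjacent.exists_swaps (h : Adjacent P P') : ∃ z w, Swaps P P' z w := by
  obtain ⟨-, k, hk, hlow, hhigh, hrest⟩ := h
  refine ⟨P ⟨k, Nat.lt_of_succ_lt hk⟩, P ⟨k + 1, hk⟩, by simp, Equiv.ext fun l => ?_⟩
  rw [Equiv.trans_apply]
  by_cases hl : (l : ℕ) = k
  · obtain rfl : l = ⟨k, Nat.lt_of_succ_lt hk⟩ := Fin.ext hl
    rw [Equiv.swap_apply_left, hhigh]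
  by_cases hl' : (l : ℕ) = k + 1
  · obtain rfl : l = ⟨k + 1, hk⟩ := Fin.ext hl'
    rw [Equiv.swap_apply_right, hlow]
  · rw [← hrest l hl hl', Equiv.swap_apply_of_ne_of_ne] <;>
      exact P.injective.ne (Fin.ne_of_val_ne ‹_›)

namespace Swaps

theorem symm_apply (h : Swaps P P' z w) (a : Fin m) :
    P'.symm a = P.symm (Equiv.swap z w a) := by
  rw [h.2, Equiv.symm_trans_apply, Equiv.symm_swap]

theorem symm (h : Swaps P P' z w) : Swaps P' P w z := by
  refine ⟨by simpa [h.symm_apply] using h.1, Equiv.ext fun l => ?_⟩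
  rw [h.2, Equiv.trans_apply, Equiv.trans_apply, Equiv.swap_comm w z, Equiv.swap_apply_self]

theorem prefers (h : Swaps P P' z w) : Prefers P z w :=
  Fin.lt_def.2 (by have := h.1; omega)

theorem ne (h : Swaps P P' z w) : z ≠ w := h.prefers.ne

theorem ne_and_ne_or (h : Swaps P P' z w) (hP : Prefers P x y) (hP' : Prefers P' x y) :
    (x ≠ z ∧ x ≠ w) ∨ (y ≠ z ∧ y ≠ w) := by
  have hzw : ¬ (x = z ∧ y = w) := by
    rintro ⟨rfl, rfl⟩; exact lt_asymm hP' h.symm.prefers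
  have hwz : ¬ (x = w ∧ y = z) := by
    rintro ⟨rfl, rfl⟩; exact lt_asymm hP h.prefers
  have hxy := hP.ne
  grind

theorem top_eq_or [NeZero m] (h : Swaps P P' z w) : P 0 = P' 0 ∨ (P 0 = z ∧ P' 0 = w) := by
  rw [h.2, Equiv.trans_apply]
  by_cases hz : P 0 = z
  · exact .inr ⟨hz, hz ▸ Equiv.swap_apply_left _ _⟩
  · have hw : P 0 ≠ w := fun hw => not_prefers_top (hw ▸ h.prefers)
    exact .inl (Equiv.swap_apply_of_ne_of_ne hz hw).symm

theorem topSum_eq (h : Swaps P P' z w) (lam : Lottery m) {k : ℕ} (hk : k ≠ P.symm z + 1) :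
    topSum lam P k = topSum lam P' k := by
  rw [topSum_eq_sum_filter, topSum_eq_sum_filter]
  refine Finset.sum_congr (Finset.filter_congr fun a _ => ?_) fun _ _ => rfl
  have hrank := h.1
  rw [h.symm_apply]
  rcases eq_or_ne a z with rfl | hz
  · rw [Equiv.swap_apply_left]; omega
  rcases eq_or_ne a w with rfl | hw
  · rw [Equiv.swap_apply_right]; omega
  · rw [Equiv.swap_apply_of_ne_of_ne hz hw]

end Swaps

end Swaps

variable {D : Set (Pref m)} {φ : Profile D n → Lottery m}

section StrategyProof

variable {Q Q' : D} {z w x : Fin m}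

/-- Both types of the voter deem the same sets of alternatives top sets, except for one, so
strategy-proofness applied in both directions gives equality. -/
theorem StrategyProof.topSum_eq_of_swaps (hsp : StrategyProof φ) (h : Swaps Q.1 Q'.1 z w)
    (P : Profile D n) (i : Fin n) {k : ℕ} (hkm : k ≤ m) (hk : k ≠ Q.1.symm z + 1) :
    topSum (φ (Function.update P i Q)) Q.1 k = topSum (φ (Function.update P i Q')) Q.1 k := by
  have hQ := hsp i (Function.update P i Q) Q' k hkm
  have hQ' := hsp i (Function.update P i Q') Q k hkm
  simp only [Function.update_idem, Function.update_self] at hQ hQ'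
  rw [← h.topSum_eq _ hk, ← h.topSum_eq _ hk] at hQ'
  exact le_antisymm hQ' hQ

theorem StrategyProof.interchangeable_of_swaps (hsp : StrategyProof φ)
    (h : Swaps Q.1 Q'.1 z w) (hz : x ≠ z) (hw : x ≠ w) :
    Interchangeable (fun P => (φ P).1 x) Q Q' := by
  intro P i
  have hrank := h.1
  have hrank_z : (Q.1.symm x : ℕ) ≠ Q.1.symm z := by simpa [Fin.val_inj] using hz
  have hrank_w : (Q.1.symm x : ℕ) ≠ Q.1.symm w := by simpa [Fin.val_inj] using hw
  have hle := hsp.topSum_eq_of_swaps h P i (Q.1.symm x).2.le (by omega)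
  have hlt := hsp.topSum_eq_of_swaps h P i (Q.1.symm x).2 (by omega)
  rw [Nat.succ_eq_add_one, topSum_succ, topSum_succ, hle] at hlt
  exact add_left_cancel hlt

end StrategyProof

section NoRestoration

variable {γ : Type*} {f : Profile D n → γ} {Q Q' R R' : D} {i : Fin n} {x y z w : Fin m}

theorem NoRestoration.prefers {π : ℕ → Pref m} {v j : ℕ} (h : NoRestoration π v x y)
    (hfirst : Prefers (π 0) x y) (hlast : Prefers (π (v - 1)) x y) (hj : j < v) :
    Prefers (π j) x y := by
  by_contra hnot
  have hrev : Prefers (π j) y x := prefers_of_not_prefers hfirst.ne hnot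
  have hj_pos : 0 < j := Nat.pos_of_ne_zero fun h0 => hnot (h0 ▸ hfirst)
  have hj_last : j ≠ v - 1 := fun hl => hnot (hl ▸ hlast)
  exact (h 0 j (v - 1) hj_pos (by omega) (by omega)).1 ⟨hfirst, hrev, hlast⟩

theorem NoRestorationDomain.interchangeable_of_prefers (hD : NoRestorationDomain D)
    (hf : ∀ ⦃R R' : D⦄ ⦃z w : Fin m⦄, Swaps R.1 R'.1 z w → Prefers R.1 x y → Prefers R'.1 x y →
      Interchangeable f R R')
    (hR : Prefers R.1 x y) (hR' : Prefers R'.1 x y) : Interchangeable f R R' := by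
  rcases eq_or_ne R R' with rfl | hne
  · exact .refl _ _
  obtain ⟨π, v, ⟨hv, hmem, -, hfirst, hlast, hadj⟩, hnr⟩ :=
    hD R R.2 R' R'.2 (Subtype.coe_ne_coe.2 hne) x y
  have hpref : ∀ j < v, Prefers (π j) x y := fun j hj =>
    hnr.prefers (hfirst ▸ hR) (hlast ▸ hR') hj
  have hreach : ∀ j (hj : j < v), Interchangeable f R ⟨π j, hmem j hj⟩ := by
    intro j
    induction j with
    | zero => simpa only [hfirst] using fun _ => .refl f R
    | succ j ih =>
      intro hj
      obtain ⟨z, w, hzw⟩ := (hadj j hj).exists_swaps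
      exact (ih (by omega)).trans (hf hzw (hpref j (by omega)) (hpref _ hj))
  simpa only [hlast] using hreach (v - 1) (by omega)

/-- The change in the probability of `x` when voter `i` reports `Q` instead of `Q'` while the
others vote as in `P`. -/
def switchEffect (φ : Profile D n → Lottery m) (i : Fin n) (Q Q' : D) (x : Fin m)
    (P : Profile D n) : ℝ :=
  (φ (Function.update P i Q)).1 x - (φ (Function.update P i Q')).1 x

theorem Interchangeable.switchEffect (h : Interchangeable (fun P => (φ P).1 x) R R') :
    Interchangeable (switchEffect φ i Q Q' x) R R' := by
  intro P j
  rcases eq_or_ne j i with rfl | hj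
  · simp only [PFBRPaper.switchEffect, Function.update_idem]
  · simp only [PFBRPaper.switchEffect, Function.update_comm hj]
    exact congrArg₂ (· - ·) (h _ j) (h _ j)

/-- A swap of `z` and `w` only moves probability between these two, so what `z` loses `w` wins. -/
theorem StrategyProof.switchEffect_eq_of_swaps (hsp : StrategyProof φ)
    (h : Swaps Q.1 Q'.1 z w) : switchEffect φ i Q Q' z = switchEffect φ i Q' Q w := by
  funext P
  have hsum : ∑ x, switchEffect φ i Q Q' x P = 0 := by
    simp only [switchEffect, Finset.sum_sub_distrib, (φ _).2.2, sub_self]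
  have hoff : ∀ x, x ≠ z ∧ x ≠ w → switchEffect φ i Q Q' x P = 0 := fun x hx =>
    sub_eq_zero.2 (hsp.interchangeable_of_swaps h hx.1 hx.2 P i)
  rw [Finset.sum_eq_add z w h.ne (fun x _ => hoff x) (by simp) (by simp)] at hsum
  simp only [switchEffect] at hsum ⊢
  linarith

theorem StrategyProof.interchangeable_switchEffect (hsp : StrategyProof φ)
    (hD : NoRestorationDomain D) (h : Swaps Q.1 Q'.1 z w) (hR : Prefers R.1 z w)
    (hR' : Prefers R'.1 z w) : Interchangeable (switchEffect φ i Q Q' z) R R' := by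
  refine hD.interchangeable_of_prefers (fun S S' z' w' hS hzw hzw' => ?_) hR hR'
  rcases hS.ne_and_ne_or hzw hzw' with ⟨hz, hw⟩ | ⟨hz, hw⟩
  · exact (hsp.interchangeable_of_swaps hS hz hw).switchEffect
  · rw [hsp.switchEffect_eq_of_swaps h]
    exact (hsp.interchangeable_of_swaps hS hz hw).switchEffect

variable [NeZero m]

/-- The effect of a swap of `z` and `w` depends only on how the others rank these two, so they
may all be given one of the two swapped preferences; if these share their top, unanimity fixes
the outcome. -/
theorem switchEffect_eq_zero (hD : NoRestorationDomain D) (hu : Unanimous φ)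
    (hsp : StrategyProof φ) (h : Swaps Q.1 Q'.1 z w) (htop : topOf Q = topOf Q') :
    switchEffect φ i Q Q' z = 0 := by
  classical
  funext P
  let P' : Profile D n := fun j => if Prefers (P j).1 z w then Q else Q'
  have hP' : switchEffect φ i Q Q' z P = switchEffect φ i Q Q' z P' := by
    refine Interchangeable.apply_congr fun j => ?_
    by_cases hj : Prefers (P j).1 z w
    · simpa only [P', hj, if_true] using hsp.interchangeable_switchEffect hD h hj h.prefers
    · have hwz := prefers_of_not_prefers h.ne hj
      simpa only [P', hj, if_false, hsp.switchEffect_eq_of_swaps h] using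
        hsp.interchangeable_switchEffect hD h.symm hwz h.symm.prefers
  have hunanimous : ∀ R : D, topOf R = topOf Q →
      φ (Function.update P' i R) = degLottery (topOf Q) := by
    refine fun R hR => hu _ _ fun j => ?_
    rcases eq_or_ne j i with rfl | hj
    · rw [Function.update_self, hR]
    · rw [Function.update_of_ne hj]
      by_cases hj : Prefers (P j).1 z w <;> simp [P', hj, htop]
  rw [hP', switchEffect, hunanimous Q rfl, hunanimous Q' htop.symm, sub_self, Pi.zero_apply]

theorem interchangeable_of_swaps_of_topOf_eq (hD : NoRestorationDomain D) (hu : Unanimous φ)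
    (hsp : StrategyProof φ) (h : Swaps Q.1 Q'.1 z w) (htop : topOf Q = topOf Q') (x : Fin m) :
    Interchangeable (fun P => (φ P).1 x) Q Q' := by
  by_cases hz : x = z
  · subst hz
    exact fun P i => sub_eq_zero.1 (congrFun (switchEffect_eq_zero hD hu hsp h htop) P)
  by_cases hw : x = w
  · subst hw
    exact fun P i =>
      (sub_eq_zero.1 (congrFun (switchEffect_eq_zero hD hu hsp h.symm htop.symm) P)).symm
  · exact hsp.interchangeable_of_swaps h hz hw

/-- Two reports which have some alternative preferred to `x` in common give `x` the same
probability. This is all that the graph-theoretic argument needs of a strategy-proof rule. -/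
def DominationInvariant (φ : Profile D n → Lottery m) : Prop :=
  ∀ ⦃a x : Fin m⦄ ⦃Q Q' : D⦄, Prefers Q.1 a x → Prefers Q'.1 a x →
    Interchangeable (fun P => (φ P).1 x) Q Q'

theorem NoRestorationDomain.dominationInvariant (hD : NoRestorationDomain D) (hu : Unanimous φ)
    (hsp : StrategyProof φ) : DominationInvariant φ := by
  refine fun a x Q Q' hQ hQ' =>
    hD.interchangeable_of_prefers (fun R R' z w h hR hR' => ?_) hQ hQ'
  rcases h.top_eq_or with htop | ⟨rfl, rfl⟩
  · exact interchangeable_of_swaps_of_topOf_eq hD hu hsp h htop x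
  · exact hsp.interchangeable_of_swaps h (fun hx => not_prefers_top (hx ▸ hR))
      fun hx => not_prefers_top (hx ▸ hR')

end NoRestoration

theorem exists_rel_of_reflTransGen {α : Type*} {r : α → α → Prop} {a b : α} {S : Set α}
    (h : Relation.ReflTransGen r a b) (ha : a ∈ S) (hb : b ∉ S) :
    ∃ c ∈ S, ∃ d ∉ S, r c d := by
  by_contra! hclosed
  refine hb ?_
  clear hb
  induction h with
  | refl => exact ha
  | tail _ hcd ih => exact not_not.1 fun hd => hclosed _ ih _ hd hcd

variable [NeZero m]

theorem prefers_topOf {Q : D} {x : Fin m} (h : topOf Q ≠ x) : Prefers Q.1 (topOf Q) x :=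
  prefers_top h.symm

section Graph

variable {A B : Set (Fin m)} {a b c x k : Fin m} {p q : Fin m}

theorem StronglyConnected.symm (h : StronglyConnected D a b) : StronglyConnected D b a := by
  obtain ⟨hab, P, hP, P', hP', htop, hsnd, htop', hsnd', hrest⟩ := h
  exact ⟨hab.symm, P', hP', P, hP, htop', hsnd', htop, hsnd, fun k hk => (hrest k hk).symm⟩

/-- `a` and `b` lie in the same connected component of the graph `G_≈^B(D)`. The relation is
reflexive also outside `B`. -/
def JoinedIn (D : Set (Pref m)) (B : Set (Fin m)) : Fin m → Fin m → Prop :=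
  Relation.ReflTransGen fun a b => StronglyConnected D a b ∧ a ∈ B ∧ b ∈ B

namespace JoinedIn

theorem mono (hAB : A ⊆ B) (h : JoinedIn D A a b) : JoinedIn D B a b :=
  Relation.ReflTransGen.mono (fun _ _ ⟨hcd, hc, hd⟩ => ⟨hcd, hAB hc, hAB hd⟩) _ _ h

theorem symm (h : JoinedIn D B a b) : JoinedIn D B b a :=
  haveI : Std.Symm fun a b => StronglyConnected D a b ∧ a ∈ B ∧ b ∈ B :=
    ⟨fun _ _ ⟨hcd, hc, hd⟩ => ⟨hcd.symm, hd, hc⟩⟩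
  Relation.ReflTransGen.stdSymm.symm _ _ h

theorem of_isChain {l : List (Fin m)} (hl : l.IsChain (StronglyConnected D)) (hne : l ≠ []) :
    JoinedIn D {y | y ∈ l} (l.head hne) (l.getLast hne) :=
  List.relationReflTransGen_of_exists_isChain l
    (hl.imp_of_mem_imp fun _ _ hc hd hcd => ⟨hcd, hc, hd⟩) hne

theorem exists_topOf_eq {Q : D} (h : JoinedIn D B (topOf Q) b) : ∃ Q' : D, topOf Q' = b := by
  rcases Relation.ReflTransGen.cases_tail h with rfl | ⟨c, -, ⟨-, P, -, P', hP', -, -, htop, -⟩, -⟩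
  · exact ⟨Q, rfl⟩
  · exact ⟨⟨P', hP'⟩, htop⟩

end JoinedIn

theorem VertexPathBetween.exists_joinedIn {l : List (Fin m)}
    (h : VertexPathBetween D Set.univ a b l) (hk : k ∈ l) :
    ∃ A B : Set (Fin m), A ∩ B ⊆ {k} ∧ JoinedIn D A a k ∧ JoinedIn D B k b := by
  obtain ⟨⟨hne, hnodup, -, hchain⟩, hhead, hlast⟩ := h
  obtain ⟨l₁, l₂, rfl⟩ := List.append_of_mem hk
  have hchain : (l₁ ++ k :: l₂).IsChain (StronglyConnected D) := hchain
  have hsplit : l₁ ++ k :: l₂ = (l₁ ++ [k]) ++ l₂ := by simp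
  refine ⟨{y | y ∈ l₁ ++ [k]}, {y | y ∈ k :: l₂}, ?_, ?_, ?_⟩
  · rintro y ⟨hy₁, hy₂⟩
    have hy₁ : y ∈ l₁ ∨ y = k := by simpa using hy₁
    exact hy₁.resolve_left fun hy₁ => (List.nodup_append.1 hnodup).2.2 y hy₁ y hy₂ rfl
  · have hne₁ : l₁ ++ [k] ≠ [] := by simp
    have hheadk : (l₁ ++ [k]).head hne₁ = a := by
      refine Option.some_injective _ ?_
      rw [← hhead, hsplit, List.head?_append_of_ne_nil _ hne₁, List.head?_eq_some_head]
    simpa only [hheadk, List.getLast_append_singleton] using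
      JoinedIn.of_isChain (hsplit ▸ hchain).left_of_append hne₁
  · have hlastk : (k :: l₂).getLast (List.cons_ne_nil k l₂) = b := by
      refine Option.some_injective _ ?_
      rw [← hlast, List.getLast?_append_of_ne_nil _ (List.cons_ne_nil k l₂),
        List.getLast?_eq_some_getLast]
    simpa only [hlastk, List.head_cons] using
      JoinedIn.of_isChain hchain.right_of_append (List.cons_ne_nil k l₂)

theorem IsHybridStar.joinedIn_compl_singleton (hstar : IsHybridStar D p q) (hkx : k ≠ x) :
    JoinedIn D {x}ᶜ k 0 ∨ JoinedIn D {x}ᶜ k (lastAlt m) := by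
  rcases eq_or_ne k 0 with rfl | hk_first
  · exact .inl .refl
  rcases eq_or_ne k (lastAlt m) with rfl | hk_last
  · exact .inr .refl
  obtain ⟨l, hl, hk⟩ := hstar.2.1 k hk_first hk_last
  obtain ⟨A, B, hAB, hA, hB⟩ := hl.exists_joinedIn hk
  by_cases hx : x ∈ A
  · exact .inr (hB.mono (Set.subset_compl_singleton_iff.2 fun hx' => hkx (hAB ⟨hx, hx'⟩).symm))
  · exact .inl (hA.mono (Set.subset_compl_singleton_iff.2 hx)).symm

theorem IsHybridStar.joinedIn_univ (hstar : IsHybridStar D p q) (hk_first : k ≠ 0)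
    (hk_last : k ≠ lastAlt m) :
    JoinedIn D Set.univ 0 k ∧ JoinedIn D Set.univ k (lastAlt m) := by
  obtain ⟨l, hl, hk⟩ := hstar.2.1 k hk_first hk_last
  obtain ⟨A, B, -, hA, hB⟩ := hl.exists_joinedIn hk
  exact ⟨hA.mono A.subset_univ, hB.mono B.subset_univ⟩

theorem exists_two_neighbors_of_not_isLeaf (hcB : c ∈ B) (hc : ¬ IsLeaf D B c)
    (h : ∃ u ∈ B, StronglyConnected D c u) :
    ∃ u ∈ B, ∃ v ∈ B, u ≠ v ∧ StronglyConnected D c u ∧ StronglyConnected D c v := by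
  obtain ⟨u, hu, hcu⟩ := h
  by_contra! hunique
  exact hc ⟨hcB, u, ⟨hu, hcu⟩, fun v ⟨hv, hcv⟩ =>
    not_not.1 fun hne => hunique v hv u hu hne hcv hcu⟩

variable {Q Q' : D}

theorem DominationInvariant.interchangeable_of_joinedIn (hφ : DominationInvariant φ)
    (h : JoinedIn D {x}ᶜ (topOf Q) (topOf Q')) (hx : topOf Q ≠ x) :
    Interchangeable (fun P => (φ P).1 x) Q Q' := by
  generalize hb : topOf Q' = b at h
  induction h generalizing Q' with
  | refl =>
    have hQ' : Prefers Q'.1 (topOf Q') x := prefers_topOf (hb ▸ hx)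
    exact hφ (prefers_topOf hx) (hb ▸ hQ')
  | @tail c d _ hcd ih =>
    obtain ⟨⟨-, P, hP, P', hP', htop, -, htop', hsnd', -⟩, hcx, hdx⟩ := hcd
    have hPc : Prefers P c x := htop ▸ prefers_top (htop ▸ Ne.symm hcx)
    have hPc' : Prefers P' c x := prefers_of_not_prefers (Ne.symm hcx) fun hxc =>
      hdx ((eq_top_of_prefers_apply_one (hsnd' ▸ hxc)).trans htop').symm
    have hPd' : Prefers P' d x := htop' ▸ prefers_top (htop' ▸ Ne.symm hdx)
    have hQd' : Prefers Q'.1 d x := hb ▸ prefers_topOf (hb.trans_ne hdx)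
    exact ((ih (Q' := ⟨P, hP⟩) htop).trans (hφ hPc hPc' (Q' := ⟨P', hP'⟩))).trans (hφ hPd' hQd')

theorem DominationInvariant.linked (hφ : DominationInvariant φ)
    (h : StronglyConnected D (topOf Q) (topOf Q')) : Linked topOf (fun P => (φ P).1) Q Q' :=
  fun _ hx hx' => hφ.interchangeable_of_joinedIn (.single ⟨h, hx.symm, hx'.symm⟩) hx.symm

theorem Unanimous.unanimousRule (hu : Unanimous φ) : UnanimousRule topOf fun P => (φ P).1 where
  mem_stdSimplex P := (φ P).2
  apply_const Q x hx := by simp [hu (fun _ => Q) _ fun _ => rfl, degLottery, hx]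

theorem DominationInvariant.switchAdditive (hφ : DominationInvariant φ) (hu : Unanimous φ)
    (hQB : topOf Q ∈ B) (hleaf : ¬ IsLeaf D B (topOf Q))
    (hnbr : ∃ u ∈ B, StronglyConnected D (topOf Q) u)
    (hB : ∀ R R' : D, topOf R ∈ B \ {topOf Q} → topOf R' ∈ B \ {topOf Q} →
      Interchangeable (fun P => (φ P).1 (topOf Q)) R R')
    (hQ' : topOf Q' ∈ B \ {topOf Q}) :
    SwitchAdditive (fun P => (φ P).1) (topOf Q) Q Q' := by
  have hballot : ∀ u, StronglyConnected D (topOf Q) u → ∃ R : D, topOf R = u := fun u hu =>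
    JoinedIn.exists_topOf_eq (B := Set.univ) (.single ⟨hu, trivial, trivial⟩)
  obtain ⟨u, huB, v, hvB, huv, hQu, hQv⟩ := exists_two_neighbors_of_not_isLeaf hQB hleaf hnbr
  obtain ⟨U, rfl⟩ := hballot u hQu
  obtain ⟨V, rfl⟩ := hballot v hQv
  have hU : topOf U ∈ B \ {topOf Q} := ⟨huB, hQu.1.symm⟩
  have hV : topOf V ∈ B \ {topOf Q} := ⟨hvB, hQv.1.symm⟩
  exact (hu.unanimousRule.switchAdditive_of_linked hQu.1 hQv.1 huv (hφ.linked hQu) (hφ.linked hQv)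
    (hB U V hU hV)).congr (hB U Q' hU hQ')

end Graph

section Cut

variable {a b c p q : Fin m} {Q Q' : D}

/-- Every preference in `D` ranks `c` above the alternatives separated by `c` from its top. The
two thresholds of a hybrid domain have this property. -/
def IsCut (D : Set (Pref m)) (c : Fin m) : Prop :=
  ∀ P ∈ D, ∀ b, (P 0 ≤ c ∧ c < b) ∨ (b < c ∧ c ≤ P 0) → Prefers P c b

theorem isCut_left_of_subset_hybridDomain (hD : D ⊆ hybridDomain p q) (hpq : p < q) :
    IsCut D p := by
  intro P hP b hb
  obtain ⟨hmono, hleft, -⟩ := hD hP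
  rcases hb with ⟨htop, hpb⟩ | ⟨hbp, htop⟩
  · rcases le_or_gt b q with hbq | hqb
    · exact hleft htop b hpb.le hbq hpb.ne'
    · have hqb' : Prefers P q b :=
        hmono b q (.inr ⟨hqb.le, le_rfl⟩) (.inr ⟨htop.trans_lt hpq, hqb⟩)
      exact lt_trans (hleft htop q hpq.le le_rfl hpq.ne') hqb'
  · rcases htop.eq_or_lt with rfl | htop
    · exact prefers_top hbp.ne
    · exact hmono b p (.inl ⟨hbp.le, le_rfl⟩) (.inl ⟨hbp, htop⟩)

theorem isCut_right_of_subset_hybridDomain (hD : D ⊆ hybridDomain p q) (hpq : p < q) :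
    IsCut D q := by
  intro P hP b hb
  obtain ⟨hmono, -, hright⟩ := hD hP
  rcases hb with ⟨htop, hqb⟩ | ⟨hbq, htop⟩
  · rcases htop.eq_or_lt with rfl | htop
    · exact prefers_top hqb.ne'
    · exact hmono b q (.inr ⟨hqb.le, le_rfl⟩) (.inr ⟨htop, hqb⟩)
  · rcases le_or_gt p b with hpb | hbp
    · exact hright htop b hpb hbq.le hbq.ne
    · have hpb' : Prefers P p b :=
        hmono b p (.inl ⟨hbp.le, le_rfl⟩) (.inl ⟨hbp, hpq.trans_le htop⟩)
      exact lt_trans (hright htop p le_rfl hpq.le hpq.ne) hpb'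

theorem le_lastAlt (a : Fin m) : a ≤ lastAlt m := Nat.le_sub_one_of_lt a.2

namespace IsCut

theorem not_stronglyConnected (hc : IsCut D c) (ha : a < c) (hb : c < b) :
    ¬ StronglyConnected D a b := by
  rintro ⟨-, P, hP, -, -, htop, hsnd, -⟩
  have hcb : Prefers P c b := hc P hP b (.inl ⟨htop ▸ ha.le, hb⟩)
  exact ha.ne' ((eq_top_of_prefers_apply_one (hsnd ▸ hcb)).trans htop)

theorem lt_of_joinedIn (hc : IsCut D c) (h : JoinedIn D {c}ᶜ a b) (ha : a < c) : b < c := by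
  induction h with
  | refl => exact ha
  | tail _ hde ih =>
    exact lt_of_le_of_ne (not_lt.1 fun he => hc.not_stronglyConnected ih he hde.1) hde.2.2

theorem gt_of_joinedIn (hc : IsCut D c) (h : JoinedIn D {c}ᶜ a b) (ha : c < a) : c < b := by
  induction h with
  | refl => exact ha
  | tail _ hde ih =>
    exact lt_of_le_of_ne (not_lt.1 fun he => hc.not_stronglyConnected he ih hde.1.symm)
      (Ne.symm hde.2.2)

theorem joinedIn_first (hc : IsCut D c) (hstar : IsHybridStar D p q) (ha : a < c) :
    JoinedIn D {c}ᶜ a 0 :=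
  (hstar.joinedIn_compl_singleton ha.ne).resolve_right fun h =>
    (hc.lt_of_joinedIn h ha).not_ge (le_lastAlt c)

theorem joinedIn_last (hc : IsCut D c) (hstar : IsHybridStar D p q) (ha : c < a) :
    JoinedIn D {c}ᶜ a (lastAlt m) :=
  (hstar.joinedIn_compl_singleton ha.ne').resolve_left fun h =>
    (hc.gt_of_joinedIn h ha).not_ge (Fin.zero_le c)

end IsCut

namespace DominationInvariant

theorem interchangeable_of_topOf_lt_cut (hφ : DominationInvariant φ) (hc : IsCut D c)
    (hstar : IsHybridStar D p q) (hQ : topOf Q < c) (hQ' : topOf Q' < c) :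
    Interchangeable (fun P => (φ P).1 c) Q Q' :=
  hφ.interchangeable_of_joinedIn
    ((hc.joinedIn_first hstar hQ).trans (hc.joinedIn_first hstar hQ').symm) hQ.ne

theorem interchangeable_of_cut_lt_topOf (hφ : DominationInvariant φ) (hc : IsCut D c)
    (hstar : IsHybridStar D p q) (hQ : c < topOf Q) (hQ' : c < topOf Q') :
    Interchangeable (fun P => (φ P).1 c) Q Q' :=
  hφ.interchangeable_of_joinedIn
    ((hc.joinedIn_last hstar hQ).trans (hc.joinedIn_last hstar hQ').symm) hQ.ne'

theorem interchangeable_of_cut_le_topOf (hφ : DominationInvariant φ) (hc : IsCut D c) (ha : a < c)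
    (hQ : c ≤ topOf Q) (hQ' : c ≤ topOf Q') : Interchangeable (fun P => (φ P).1 a) Q Q' :=
  hφ (hc Q.1 Q.2 a (.inr ⟨ha, hQ⟩)) (hc Q'.1 Q'.2 a (.inr ⟨ha, hQ'⟩))

theorem interchangeable_of_topOf_le_cut (hφ : DominationInvariant φ) (hc : IsCut D c) (ha : c < a)
    (hQ : topOf Q ≤ c) (hQ' : topOf Q' ≤ c) : Interchangeable (fun P => (φ P).1 a) Q Q' :=
  hφ (hc Q.1 Q.2 a (.inl ⟨hQ, ha⟩)) (hc Q'.1 Q'.2 a (.inl ⟨hQ', ha⟩))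

end DominationInvariant

end Cut

section HybridStar

variable {p q x y : Fin m} {b c d Q Q' : D}

namespace IsHybridStar

theorem exists_joinedIn_univ_between (hstar : IsHybridStar D p q) (hgap : (p : ℕ) + 1 < q) :
    ∃ k, p < k ∧ k < q ∧ JoinedIn D Set.univ 0 k ∧ JoinedIn D Set.univ k (lastAlt m) := by
  let k : Fin m := ⟨p + 1, hgap.trans q.2⟩
  have hpk : p < k := Nat.lt_succ_self p
  have hkq : k < q := hgap
  exact ⟨k, hpk, hkq, hstar.joinedIn_univ (Fin.pos_iff_ne_zero.1 ((Fin.zero_le p).trans_lt hpk))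
    (hkq.trans_le (le_lastAlt q)).ne⟩

theorem exists_neighbor_left (hstar : IsHybridStar D p q) (hgap : (p : ℕ) + 1 < q) :
    ∃ u ∈ Set.Icc p q, StronglyConnected D p u := by
  have hpq : p < q := Fin.lt_def.2 (by omega)
  obtain ⟨k, hpk, -, hk, -⟩ := hstar.exists_joinedIn_univ_between hgap
  obtain ⟨c, hcp, u, hpu, hcu, -⟩ :=
    exists_rel_of_reflTransGen (S := Set.Iic p) hk (Fin.zero_le p) hpk.not_ge
  have hpu : p < u := not_le.1 hpu
  obtain rfl : c = p := hcp.eq_of_not_lt fun hcp =>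
    (isCut_left_of_subset_hybridDomain hstar.1 hpq).not_stronglyConnected hcp hpu hcu
  exact ⟨u, ⟨hpu.le, not_lt.1 fun hqu =>
    (isCut_right_of_subset_hybridDomain hstar.1 hpq).not_stronglyConnected hpq hqu hcu⟩, hcu⟩

theorem exists_neighbor_right (hstar : IsHybridStar D p q) (hgap : (p : ℕ) + 1 < q) :
    ∃ u ∈ Set.Icc p q, StronglyConnected D q u := by
  have hpq : p < q := Fin.lt_def.2 (by omega)
  obtain ⟨k, -, hkq, -, hk⟩ := hstar.exists_joinedIn_univ_between hgap
  obtain ⟨u, huq, c, hqc, huc, -⟩ :=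
    exists_rel_of_reflTransGen (S := Set.Iio q) hk hkq (le_lastAlt q).not_gt
  have huq : u < q := huq
  obtain rfl : q = c := (not_lt.1 hqc).eq_of_not_lt fun hqc =>
    (isCut_right_of_subset_hybridDomain hstar.1 hpq).not_stronglyConnected huq hqc huc
  exact ⟨u, ⟨not_lt.1 fun hup =>
    (isCut_left_of_subset_hybridDomain hstar.1 hpq).not_stronglyConnected hup hpq huc, huq.le⟩,
    huc.symm⟩

theorem switchAdditive_left (hstar : IsHybridStar D p q) (hgap : (p : ℕ) + 1 < q)
    (hu : Unanimous φ) (hφ : DominationInvariant φ) (hb : topOf b = p) (hc : topOf c = q) :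
    SwitchAdditive (fun P => (φ P).1) (topOf b) b c := by
  subst hb hc
  have hpq : topOf b < topOf c := Fin.lt_def.2 (by omega)
  have hcut := isCut_left_of_subset_hybridDomain hstar.1 hpq
  refine hφ.switchAdditive (B := Set.Icc (topOf b) (topOf c)) hu ⟨le_rfl, hpq.le⟩ (hstar.2.2 hgap _)
    (hstar.exists_neighbor_left hgap) (fun R R' hR hR' => ?_) ⟨⟨hpq.le, le_rfl⟩, hpq.ne'⟩
  exact hφ.interchangeable_of_cut_lt_topOf hcut hstar (lt_of_le_of_ne hR.1.1 (Ne.symm hR.2))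
    (lt_of_le_of_ne hR'.1.1 (Ne.symm hR'.2))

theorem switchAdditive_right (hstar : IsHybridStar D p q) (hgap : (p : ℕ) + 1 < q)
    (hu : Unanimous φ) (hφ : DominationInvariant φ) (hb : topOf b = p) (hc : topOf c = q) :
    SwitchAdditive (fun P => (φ P).1) (topOf c) c b := by
  subst hb hc
  have hpq : topOf b < topOf c := Fin.lt_def.2 (by omega)
  have hcut := isCut_right_of_subset_hybridDomain hstar.1 hpq
  refine hφ.switchAdditive (B := Set.Icc (topOf b) (topOf c)) hu ⟨hpq.le, le_rfl⟩ (hstar.2.2 hgap _)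
    (hstar.exists_neighbor_right hgap) (fun R R' hR hR' => ?_) ⟨⟨le_rfl, hpq.le⟩, hpq.ne⟩
  exact hφ.interchangeable_of_topOf_lt_cut hcut hstar (lt_of_le_of_ne hR.1.2 hR.2)
    (lt_of_le_of_ne hR'.1.2 hR'.2)

theorem exists_topOf_eq (hstar : IsHybridStar D p q) (hgap : (p : ℕ) + 1 < q) :
    ∃ b c : D, topOf b = p ∧ topOf c = q := by
  obtain ⟨-, -, -, P, hP, -, -, hPtop, -⟩ := hstar.exists_neighbor_left hgap
  obtain ⟨-, -, -, P', hP', -, -, hPtop', -⟩ := hstar.exists_neighbor_right hgap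
  exact ⟨⟨P, hP⟩, ⟨P', hP'⟩, hPtop, hPtop'⟩

/-- Walking from the top of `d` to one end of the order without meeting `x` leads to a
preference which ranks a threshold above `x`. -/
theorem interchangeable_threshold_or (hstar : IsHybridStar D p q) (hφ : DominationInvariant φ)
    (hb : topOf b = p) (hc : topOf c = q) (hpx : p < x) (hxq : x < q) (hd : topOf d ≠ x) :
    Interchangeable (fun P => (φ P).1 x) d b ∨ Interchangeable (fun P => (φ P).1 x) d c := by
  have hpq := hpx.trans hxq
  rcases hstar.joinedIn_compl_singleton hd with h | h
  · obtain ⟨e, he⟩ := h.exists_topOf_eq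
    have hpe : Prefers e.1 p x := isCut_left_of_subset_hybridDomain hstar.1 hpq e.1 e.2 x
      (.inl ⟨he.trans_le (Fin.zero_le p), hpx⟩)
    have hpb : Prefers b.1 p x := hb ▸ prefers_topOf (hb.trans_ne hpx.ne)
    exact .inl ((hφ.interchangeable_of_joinedIn (he ▸ h) hd).trans (hφ hpe hpb))
  · obtain ⟨e, he⟩ := h.exists_topOf_eq
    have hqe : Prefers e.1 q x := isCut_right_of_subset_hybridDomain hstar.1 hpq e.1 e.2 x
      (.inr ⟨hxq, (le_lastAlt q).trans_eq he.symm⟩)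
    have hqc : Prefers c.1 q x := hc ▸ prefers_topOf (hc.trans_ne hxq.ne')
    exact .inr ((hφ.interchangeable_of_joinedIn (he ▸ h) hd).trans (hφ hqe hqc))

theorem interchangeable_threshold_or_of_topOf_mem_Ioo (hstar : IsHybridStar D p q)
    (hφ : DominationInvariant φ) (hb : topOf b = p) (hc : topOf c = q) (hpd : p < topOf d)
    (hdq : topOf d < q) (hyd : y ≠ topOf d) (hyp : y ≠ p) (hyq : y ≠ q) :
    Interchangeable (fun P => (φ P).1 y) d b ∨ Interchangeable (fun P => (φ P).1 y) d c := by
  have hpq := hpd.trans hdq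
  rcases hyp.lt_or_gt with hyp | hpy
  · exact .inl (hφ.interchangeable_of_cut_le_topOf
      (isCut_left_of_subset_hybridDomain hstar.1 hpq) hyp hpd.le hb.ge)
  rcases hyq.lt_or_gt with hyq | hqy
  · exact hstar.interchangeable_threshold_or hφ hb hc hpy hyq hyd.symm
  · exact .inr (hφ.interchangeable_of_topOf_le_cut
      (isCut_right_of_subset_hybridDomain hstar.1 hpq) hqy hdq.le hc.le)

theorem exists_apply_eq_switchMass (hstar : IsHybridStar D p q) (hgap : (p : ℕ) + 1 < q)
    (hu : Unanimous φ) (hφ : DominationInvariant φ) (hpx : p < x) (hxq : x < q) :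
    ∃ b c : D, ∀ (P : Profile D n) (K : Finset (Fin n)), (∀ i, i ∈ K ↔ topOf (P i) = x) →
      (φ P).1 x = switchMass (fun P => (φ P).1) (topOf b) b c K := by
  obtain ⟨b, c, hb, hc⟩ := hstar.exists_topOf_eq hgap
  have hpq := hpx.trans hxq
  have hcut_p := isCut_left_of_subset_hybridDomain hstar.1 hpq
  have hcut_q := isCut_right_of_subset_hybridDomain hstar.1 hpq
  refine ⟨b, c, fun P K hK => hu.unanimousRule.apply_eq_switchMass (by rw [hb, hc]; exact hpq.ne)
    (hstar.switchAdditive_left hgap hu hφ hb hc) (hstar.switchAdditive_right hgap hu hφ hb hc)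
    (hb ▸ hpx.ne') (hc ▸ hxq.ne) ?_ ?_ ?_ ?_ hK⟩
  · rintro d rfl
    rw [hb]
    exact hφ.interchangeable_of_cut_lt_topOf hcut_p hstar hpx (hc ▸ hpq)
  · rintro d rfl
    rw [hc]
    exact hφ.interchangeable_of_topOf_lt_cut hcut_q hstar hxq (hb ▸ hpq)
  · rintro d rfl y hyd hyb hyc
    exact hstar.interchangeable_threshold_or_of_topOf_mem_Ioo hφ hb hc hpx hxq hyd (hb ▸ hyb)
      (hc ▸ hyc)
  · exact fun d hd => hstar.interchangeable_threshold_or hφ hb hc hpx hxq hd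

theorem interchangeable_of_mem_Ioo (hstar : IsHybridStar D p q) (hgap : (p : ℕ) + 1 < q)
    (hu : Unanimous φ) (hφ : DominationInvariant φ) (hpx : p < x) (hxq : x < q)
    (hQ : topOf Q ≠ x) (hQ' : topOf Q' ≠ x) :
    Interchangeable (fun P => (φ P).1 x) Q Q' := by
  obtain ⟨b, c, hmass⟩ := hstar.exists_apply_eq_switchMass hgap hu hφ hpx hxq
  intro P i
  have hK : ∀ R : D, topOf R ≠ x → ∀ j,
      j ∈ ({j | j ≠ i ∧ topOf (P j) = x} : Finset (Fin n)) ↔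
        topOf (Function.update P i R j) = x := by
    intro R hR j
    rcases eq_or_ne j i with rfl | hj
    · simp [hR]
    · simp [hj]
  exact (hmass _ _ (hK Q hQ)).trans (hmass _ _ (hK Q' hQ')).symm

end IsHybridStar

end HybridStar

theorem refined_uncompromising_general {p q : Fin m} (hgap : (p : ℕ) + 1 < q)
    (hD : NoRestorationDomain D) (hstar : IsHybridStar D p q) (hu : Unanimous φ)
    (hsp : StrategyProof φ) {Q Q' : D} (hpQ : p ≤ topOf Q) (hQq : topOf Q ≤ q)
    (hpQ' : p ≤ topOf Q') (hQq' : topOf Q' ≤ q) {a : Fin m} (ha : a ≠ topOf Q)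
    (ha' : a ≠ topOf Q') : Interchangeable (fun P => (φ P).1 a) Q Q' := by
  have hφ : DominationInvariant φ := hD.dominationInvariant hu hsp
  have hpq : p < q := Fin.lt_def.2 (by omega)
  have hcut_p : IsCut D p := isCut_left_of_subset_hybridDomain hstar.1 hpq
  have hcut_q : IsCut D q := isCut_right_of_subset_hybridDomain hstar.1 hpq
  rcases lt_trichotomy a p with hap | rfl | hpa
  · exact hφ.interchangeable_of_cut_le_topOf hcut_p hap hpQ hpQ'
  · exact hφ.interchangeable_of_cut_lt_topOf hcut_p hstar (lt_of_le_of_ne hpQ ha)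
      (lt_of_le_of_ne hpQ' ha')
  rcases lt_trichotomy a q with haq | rfl | hqa
  · exact hstar.interchangeable_of_mem_Ioo hgap hu hφ hpa haq ha.symm ha'.symm
  · exact hφ.interchangeable_of_topOf_lt_cut hcut_q hstar (lt_of_le_of_ne hQq ha.symm)
      (lt_of_le_of_ne hQq' ha'.symm)
  · exact hφ.interchangeable_of_topOf_le_cut hcut_q hqa hQq hQq'

end PFBRPaper

/-- On a regular `(p,q)`-hybrid* domain with `q - p > 1`, when a voter
switches between two preferences with distinct tops in `M`, the probability of any other
alternative is unchanged. -/
theorem refined_uncompromising (m n : ℕ) [NeZero m] (hm : 3 ≤ m) (hn : 2 ≤ n)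
    (D : Set (Pref m)) (p q : Fin m) (hgap : (p : ℕ) + 1 < (q : ℕ))
    (hreg : RegularDomain D) (hstar : IsHybridStar D p q)
    (φ : Profile D n → Lottery m) (hu : Unanimous φ) (hsp : StrategyProof φ) :
    ∀ (i : Fin n) (P : Profile D n) (Pi Pi' : D),
      topOf Pi ≠ topOf Pi' →
      p ≤ topOf Pi → topOf Pi ≤ q → p ≤ topOf Pi' → topOf Pi' ≤ q →
      ∀ a : Fin m, a ≠ topOf Pi → a ≠ topOf Pi' →
        (φ (Function.update P i Pi)).1 a = (φ (Function.update P i Pi')).1 a :=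
  fun i P _ _ _ hp hq hp' hq' _ ha ha' =>
    refined_uncompromising_general hgap hreg.2.2 hstar hu hsp hp hq hp' hq' ha ha' P i
end
end

section
/- Let 1 ≤ p < q ≤ m with 1 < q − p < m − 1 and let (β_S)_{S⊆N} be the probabilistic ballots of a (p, q)-PFBR on [D_≺(p, q)]^n which is anonymous (β_S = β_{S′} for all nonempty S, S′ ⊆ N with |S| = |S′|, so every conditional dictatorial coefficient equals 1/n) and satisfies per-capita monotonicity w.r.t. a_p and a_q. Then for all S ⊂ S′ ⊂ N, b̂_S^L ⪯ b̂_{S′}^L. -/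
open Finset

noncomputable section

open PFBRPaper

/-!
Write `β_S[a_1, a_k]` for the probability that `β_S` assigns to `[a_1, a_k]`. For `k ≤ p`, the
threshold `b̂_S^L` is at most `k` exactly when `β_S[a_1, a_k]` exhausts `β_S[a_1, a_p]`. By the
constrained random-dictatorship condition, `β_S[a_1, a_p] / |Sᶜ|` is the average coefficient of the
voters outside `S`. Per-capita monotonicity at `a_p` makes this average monotone along inclusions,
and comparing `{i}` and `{j}` with `{i, j}` shows that all these coefficients are equal as soon as
`S` is nonempty; hence the ratio is the same for `S` and `S' ⊃ S`. Per-capita monotonicity at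
`a_k = b̂_{S'}^L` then transfers exhaustion from `S'` to `S`.
-/

namespace PFBRPaper

section Lotteries

variable {m : ℕ}

@[simp]
lemma mem_downSet {a k : Fin m} : a ∈ downSet k ↔ a ≤ k := by
  simp [downSet]

lemma downSet_subset_downSet {k l : Fin m} (hkl : k ≤ l) : downSet k ⊆ downSet l :=
  fun _ ha => mem_downSet.2 ((mem_downSet.1 ha).trans hkl)

lemma Lottery.mem_supp {lam : Lottery m} {a : Fin m} : a ∈ lam.supp ↔ lam.1 a ≠ 0 := by
  simp [Lottery.supp, (lam.2.1 a).lt_iff_ne']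

lemma supp_degLottery (a : Fin m) : (degLottery a).supp = {a} := by
  ext b
  rw [Lottery.mem_supp, mem_singleton]
  simp [degLottery]

lemma Lottery.prob_le_prob_iff_supp_inter_subset (lam : Lottery m) {B C : Finset (Fin m)}
    (hBC : B ⊆ C) : lam.prob C ≤ lam.prob B ↔ lam.supp ∩ C ⊆ B := by
  have hsplit : lam.prob (C \ B) + lam.prob B = lam.prob C := sum_sdiff hBC
  have hnonneg : 0 ≤ lam.prob (C \ B) := sum_nonneg fun a _ => lam.2.1 a
  have hzero : lam.prob (C \ B) = 0 ↔ ∀ a ∈ C \ B, lam.1 a = 0 :=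
    sum_eq_zero_iff_of_nonneg fun a _ => lam.2.1 a
  calc lam.prob C ≤ lam.prob B ↔ lam.prob (C \ B) = 0 := by
        constructor <;> intro h <;> linarith
    _ ↔ ∀ a ∈ C \ B, lam.1 a = 0 := hzero
    _ ↔ lam.supp ∩ C ⊆ B := by
        simp only [subset_iff, mem_inter, mem_sdiff, Lottery.mem_supp]
        grind

end Lotteries

section LeftThreshold

variable {m n : ℕ} [NeZero m] {β : Finset (Fin n) → Lottery m} {p k : Fin m} {S : Finset (Fin n)}

lemma bL_le_iff_supp_inter_subset : bL β p S ≤ k ↔ (β S).supp ∩ downSet p ⊆ downSet k := by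
  unfold bL
  split_ifs with h
  · simp only [max'_le_iff, subset_iff, mem_downSet]
  · simp [not_nonempty_iff_eq_empty.1 h]

lemma bL_le (β : Finset (Fin n) → Lottery m) (p : Fin m) (S : Finset (Fin n)) : bL β p S ≤ p :=
  bL_le_iff_supp_inter_subset.2 inter_subset_right

lemma bL_le_iff_prob_le (hk : k ≤ p) :
    bL β p S ≤ k ↔ (β S).prob (downSet p) ≤ (β S).prob (downSet k) :=
  bL_le_iff_supp_inter_subset.trans
    ((β S).prob_le_prob_iff_supp_inter_subset (downSet_subset_downSet hk)).symm

lemma bL_eq_zero_of_eq_degLottery (hS : β S = degLottery 0) : bL β p S = 0 := by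
  refine le_antisymm (bL_le_iff_supp_inter_subset.2 ?_) (Fin.zero_le _)
  rw [hS, supp_degLottery]
  exact inter_subset_left.trans (singleton_subset_iff.2 (mem_downSet.2 le_rfl))

end LeftThreshold

section LeftConditions

variable {m n : ℕ}

/-- The half of the constrained random-dictatorship condition that concerns `L = [a_1, a_p]`, with
conditional dictatorial coefficients `ε`. -/
def LeftConstrainedRD (p : Fin m) (ε : Fin n → ℝ) (β : Finset (Fin n) → Lottery m) : Prop :=
  ∀ S : Finset (Fin n), (β S).prob (downSet p) = ∑ i ∈ Sᶜ, ε i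

/-- The half of per-capita monotonicity that concerns `L = [a_1, a_p]`. Coalitions are replaced by
their complements relative to `PerCapitaMonotone`, so that the ballots are those of `S` and `S'`. -/
def LeftPerCapitaMonotone (p : Fin m) (β : Finset (Fin n) → Lottery m) : Prop :=
  ∀ S S' : Finset (Fin n), S.Nonempty → S ⊂ S' → S' ⊂ univ → ∀ s ≤ p,
    (β S').prob (downSet s) / (S'ᶜ.card : ℝ) ≤ (β S).prob (downSet s) / (Sᶜ.card : ℝ)

variable {p q : Fin m} {ε : Fin n → ℝ} {β : Finset (Fin n) → Lottery m} {S S' : Finset (Fin n)}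

lemma ConstrainedRDUniform.left (h : ConstrainedRDUniform p q β) :
    LeftConstrainedRD p (fun _ => (n : ℝ)⁻¹) β := fun S => by
  rw [(h S).2, sum_const, nsmul_eq_mul, div_eq_mul_inv]

lemma PerCapitaMonotone.left (h : PerCapitaMonotone p q β) : LeftPerCapitaMonotone p β := by
  intro S S' hS hSS' hS'
  have hS'c : S'ᶜ.Nonempty := by
    simpa [nonempty_iff_ne_empty] using hS'.ne
  have hSc : Sᶜ ⊂ univ := by
    simpa [ssubset_univ_iff, nonempty_iff_ne_empty] using hS
  simpa only [compl_compl] using (h S'ᶜ Sᶜ hS'c (compl_ssubset_compl.2 hSS') hSc).2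

lemma LeftPerCapitaMonotone.coeff_le (hpc : LeftPerCapitaMonotone p β)
    (hrd : LeftConstrainedRD p ε β) (hS : S.Nonempty) {i j : Fin n} (hi : i ∉ S) (hj : j ∉ S) :
    ε i ≤ ε j := by
  obtain rfl | hij := eq_or_ne i j
  · exact le_rfl
  have hne : ({j, i}ᶜ : Finset (Fin n)).Nonempty :=
    hS.mono (subset_compl_comm.1 (by simp [insert_subset_iff, hi, hj]))
  have hsub : ({j, i}ᶜ : Finset (Fin n)) ⊂ {i}ᶜ :=
    compl_ssubset_compl.2 (ssubset_insert (notMem_singleton.2 hij.symm))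
  have havg : ε i / 1 ≤ (ε j + ε i) / 2 := by
    simpa [hrd _, sum_pair hij.symm, card_pair hij.symm] using
      hpc _ _ hne hsub (by simp [ssubset_univ_iff]) p le_rfl
  linarith

lemma LeftPerCapitaMonotone.prob_div_card_compl_eq_coeff (hpc : LeftPerCapitaMonotone p β)
    (hrd : LeftConstrainedRD p ε β) (hS : S.Nonempty) {j : Fin n} (hj : j ∉ S) :
    (β S).prob (downSet p) / (Sᶜ.card : ℝ) = ε j := by
  have hconst : ∀ i ∈ Sᶜ, ε i = ε j := fun i hi =>
    (hpc.coeff_le hrd hS (mem_compl.1 hi) hj).antisymm (hpc.coeff_le hrd hS hj (mem_compl.1 hi))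
  have hcard : (Sᶜ.card : ℝ) ≠ 0 := Nat.cast_ne_zero.2 (card_ne_zero_of_mem (mem_compl.2 hj))
  rw [hrd, sum_congr rfl hconst, sum_const, nsmul_eq_mul, mul_div_cancel_left₀ _ hcard]

lemma LeftPerCapitaMonotone.bL_le_bL [NeZero m] (hpc : LeftPerCapitaMonotone p β)
    (hrd : LeftConstrainedRD p ε β) (hS : S.Nonempty) (hSS' : S ⊂ S') (hS' : S' ⊂ univ) :
    bL β p S ≤ bL β p S' := by
  obtain ⟨j, -, hj⟩ := exists_of_ssubset hS'
  have hjS : j ∉ S := fun h => hj (hSS'.subset h)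
  have hcard : (0 : ℝ) < Sᶜ.card := Nat.cast_pos.2 (card_pos.2 ⟨j, mem_compl.2 hjS⟩)
  set k := bL β p S' with hk
  have hkp : k ≤ p := bL_le β p S'
  have hexhaust : (β S').prob (downSet p) ≤ (β S').prob (downSet k) :=
    (bL_le_iff_prob_le hkp).1 hk.ge
  refine (bL_le_iff_prob_le hkp).2 ((div_le_div_iff_of_pos_right hcard).1 ?_)
  calc (β S).prob (downSet p) / (Sᶜ.card : ℝ)
      = ε j := hpc.prob_div_card_compl_eq_coeff hrd hS hjS
    _ = (β S').prob (downSet p) / (S'ᶜ.card : ℝ) :=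
        (hpc.prob_div_card_compl_eq_coeff hrd (hS.mono hSS'.subset) hj).symm
    _ ≤ (β S').prob (downSet k) / (S'ᶜ.card : ℝ) := by gcongr
    _ ≤ (β S).prob (downSet k) / (Sᶜ.card : ℝ) := hpc S S' hS hSS' hS' k hkp

end LeftConditions

end PFBRPaper

theorem bL_monotone_general {m n : ℕ} [NeZero m] {p : Fin m} {ε : Fin n → ℝ}
    {β : Finset (Fin n) → Lottery m} (hempty : β ∅ = degLottery 0)
    (hrd : LeftConstrainedRD p ε β) (hpc : LeftPerCapitaMonotone p β)
    {S S' : Finset (Fin n)} (hSS' : S ⊂ S') (hS' : S' ⊂ univ) : bL β p S ≤ bL β p S' := by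
  obtain rfl | hS := S.eq_empty_or_nonempty
  · exact (bL_eq_zero_of_eq_degLottery hempty).trans_le (Fin.zero_le _)
  · exact hpc.bL_le_bL hrd hS hSS' hS'

/-- For an anonymous per-capita monotone `(p,q)`-PFBR
(`1 < q - p < m - 1`), the left thresholds `b̂_S^L` are monotone in `S`. -/
theorem bL_monotone (m n : ℕ) [NeZero m] (hm : 3 ≤ m) (hn : 2 ≤ n)
    (p q : Fin m) (hgap1 : (p : ℕ) + 1 < (q : ℕ)) (hgap2 : (q : ℕ) - (p : ℕ) < m - 1)
    (φ : Profile (hybridDomain p q) n → Lottery m)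
    (β : Finset (Fin n) → Lottery m) (hβ : IsPFBRWith φ β)
    (hanon : BallotAnonymous β) (hcrd : ConstrainedRDUniform p q β)
    (hpcm : PerCapitaMonotone p q β) :
    ∀ S S' : Finset (Fin n), S ⊂ S' → S' ⊂ Finset.univ → bL β p S ≤ bL β p S' :=
  fun _ _ hSS' hS' => bL_monotone_general hβ.1.2 hcrd.left hpcm.left hSS' hS'
end
end
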